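/- Assume α = 1, α' = 2, 2β ≤ β', 2γ ≤ γ', Q = (x, y^β, z^γ)R, and that 2 is a unit in R. Then depth R/(I³ :_R Q²) > 0, so I^{(3)} = I³ :_R Q², and length_R(I^{(3)}/I³) = 6 · length_R(R/Q). -/

import Mathlib

open IsLocalRing

/-- The `n`-th symbolic power `I⁽ⁿ⁾ = ⋂_{p ∈ Min(R/I)} (IⁿR_p ∩ R)`. -/
noncomputable def symbolicPower {R : Type*} [CommRing R] (I : Ideal R) (n : ℕ) : Ideal R :=
  ⨅ p : I.minimalPrimes,
    haveI : Ideal.IsPrime (p : Ideal R) := p.2.1.1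
    Ideal.comap (algebraMap R (Localization.AtPrime (p : Ideal R)))
      (Ideal.map (algebraMap R (Localization.AtPrime (p : Ideal R))) (I ^ n))

/-- `M` has (finite) length `n` over `R`: there is a composition series from
`⊥` to `⊤` of length `n`. -/
def HasLength (R M : Type*) [CommRing R] [AddCommGroup M] [Module R M] (n : ℕ) : Prop :=
  ∃ s : CompositionSeries (Submodule R M), s.head = ⊥ ∧ s.last = ⊤ ∧ s.length = n

/-- The maximal minors `a, b, c` of `((X, Y, Z), (pY², qZ², X²))` together with three elements
`d, e, f` that generate the third symbolic power of `(a, b, c)` modulo its third power. -/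
structure MinorData {R : Type*} [CommRing R] (X Y Z p q a b c d e f : R) : Prop where
  ha : a = Z ^ 3 * q - X ^ 2 * Y
  hb : b = X ^ 3 - Y ^ 2 * Z * p
  hc : c = Y ^ 3 * p - X * Z ^ 2 * q
  hd : d = - X ^ 8 * q + 3 * X ^ 5 * Y ^ 2 * Z * p * q + X ^ 3 * Y * Z ^ 4 * p * q ^ 2
    - 5 * X ^ 2 * Y ^ 4 * Z ^ 2 * p ^ 2 * q + X * Y ^ 7 * p ^ 3 - X * Z ^ 7 * p * q ^ 3
    + 2 * Y ^ 3 * Z ^ 5 * p ^ 2 * q ^ 2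
  he : e = X ^ 7 * Y * q - 2 * X ^ 5 * Z ^ 3 * q ^ 2 - X ^ 4 * Y ^ 3 * Z * p * q
    + 5 * X ^ 2 * Y ^ 2 * Z ^ 4 * p * q ^ 2 - 3 * X * Y ^ 5 * Z ^ 2 * p ^ 2 * q
    + Y ^ 8 * p ^ 3 - Y * Z ^ 7 * p * q ^ 3
  hf : f = X ^ 7 * Z * q - 5 * X ^ 4 * Y ^ 2 * Z ^ 2 * p * q + 2 * X ^ 3 * Y ^ 5 * p ^ 2
    + 3 * X ^ 2 * Y * Z ^ 5 * p * q ^ 2 + X * Y ^ 4 * Z ^ 3 * p ^ 2 * q - Y ^ 7 * Z * p ^ 3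
    - Z ^ 8 * p * q ^ 3

namespace MinorData

section Relations

variable {R : Type*} [CommRing R] {X Y Z p q a b c d e f : R}
  (D : MinorData X Y Z p q a b c d e f)
include D

lemma syzygy : X * a + Y * b + Z * c = 0 := by
  obtain ⟨rfl, rfl, rfl, -, -, -⟩ := D; ring

lemma X_mul_d : X * d = - q * b ^ 3 - p * a * c ^ 2 := by
  obtain ⟨rfl, rfl, rfl, rfl, -, -⟩ := D; ring

lemma Y_mul_e : Y * e = c ^ 3 + q * a ^ 2 * b := by
  obtain ⟨rfl, rfl, rfl, -, rfl, -⟩ := D; ring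

lemma Z_mul_f : Z * f = - p * a ^ 3 - b ^ 2 * c := by
  obtain ⟨rfl, rfl, rfl, -, -, rfl⟩ := D; ring

lemma Y_mul_d_sub : Y * d - X * e = 2 * q * a * b ^ 2 := by
  obtain ⟨rfl, rfl, rfl, rfl, rfl, -⟩ := D; ring

lemma Z_mul_d_add : Z * d + X * f = 2 * p * a ^ 2 * c := by
  obtain ⟨rfl, rfl, rfl, rfl, -, rfl⟩ := D; ring

lemma Z_mul_e_sub : Z * e - Y * f = - 2 * b * c ^ 2 := by
  obtain ⟨rfl, rfl, rfl, -, rfl, rfl⟩ := D; ring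

/-- A generator of the second symbolic power modulo the square; it is multiplied into the square
by `X`, `Y` and `Z`. -/
lemma exists_quadratic : ∃ g, X * g = q * Z * b ^ 2 - p * Y * a * c ∧
    Y * g = X * c ^ 2 - q * Z * a * b ∧ Z * g = p * Y * a ^ 2 - X * b * c ∧
    Y * d = c * g + q * a * b ^ 2 ∧ Z * d = p * a ^ 2 * c - b * g ∧
    Z * e = - a * g - b * c ^ 2 := by
  obtain ⟨rfl, rfl, rfl, rfl, rfl, rfl⟩ := D
  refine ⟨X ^ 5 * Z * q - 3 * X ^ 2 * Y ^ 2 * Z ^ 2 * p * q + X * Y ^ 5 * p ^ 2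
    + Y * Z ^ 5 * p * q ^ 2, ?_, ?_, ?_, ?_, ?_, ?_⟩ <;> ring

/-- Each of the nine vectors with coefficients `k₁, …, k₉` is a relation among the ten elements. -/
lemma combination_eq_zero {h : R} (h2 : 2 * h = 1) (k₁ k₂ k₃ k₄ k₅ k₆ k₇ k₈ k₉ : R) :
    (q * k₁ - Y * k₃) * b ^ 3 + (X * k₁ + Z * k₂ - h * Y * k₄) * d
      + (X * k₂ + Z ^ 2 * k₃ + h * Y * Z * k₅ - h * Y ^ 2 * k₇) * f
      + (- X * k₃ + q * k₄ + Y * k₆) * (a * b ^ 2)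
      + (h * X * k₄ + h * Z ^ 2 * k₅ - h * Y * Z * k₇) * e
      + (- X * k₅ + Z * k₆ + Y * k₈) * (a * b * c)
      + (X * k₆ + q * Z * k₇ + Y * k₉) * (a ^ 2 * b)
      + (p * k₁ - X * k₇ + Z * k₈) * (a * c ^ 2)
      + (- 2 * p * k₂ + X * k₈ + Z * k₉) * (a ^ 2 * c)
      + (p * Z * k₃ + p * Y * k₅ + X * k₉) * a ^ 3 = 0 := by
  linear_combination k₁ * D.X_mul_d + k₂ * D.Z_mul_d_add
    + k₃ * (Z * D.Z_mul_f - b ^ 2 * D.syzygy) - k₄ * (h * D.Y_mul_d_sub + q * a * b ^ 2 * h2)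
    + k₅ * (Y * D.Z_mul_f + h * Z * D.Z_mul_e_sub + (Y * Z * f - Z * b * c ^ 2) * h2
      - b * c * D.syzygy)
    + k₆ * a * b * D.syzygy
    + k₇ * (h * Y * D.Z_mul_e_sub - Z * D.Y_mul_e - (Y * Z * e + Y * b * c ^ 2) * h2
      - c ^ 2 * D.syzygy)
    + k₈ * a * c * D.syzygy + k₉ * a ^ 2 * D.syzygy

end Relations

end MinorData

/-- `u` is a nonzerodivisor and `X` is a nonzerodivisor modulo `u`. -/
structure RegularPair {B : Type*} [CommRing B] (u X : B) : Prop where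
  eq_zero : ∀ r, u * r = 0 → r = 0
  dvd : ∀ n r, u ∣ X ^ n * r → u ∣ r

/-- The relations modulo `Y` are generated by the nine relations of
`MinorData.combination_eq_zero`. -/
lemma exists_coefficients_of_monomial_relation {B : Type*} [CommRing B] {X Z p q h : B}
    (h2 : 2 * h = 1) (hq : RegularPair q X) (hZ : RegularPair Z X) (hZ2 : RegularPair (Z ^ 2) X)
    (hqZ : RegularPair (q * Z) X) (r₀ r₁ r₂ r₃ r₄ r₅ r₆ r₇ r₈ r₉ : B)
    (H : r₀ * X ^ 9 + r₁ * (- X ^ 8 * q - X * Z ^ 7 * p * q ^ 3)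
      + r₂ * (X ^ 7 * Z * q - Z ^ 8 * p * q ^ 3) + r₃ * (X ^ 6 * Z ^ 3 * q)
      + r₄ * (- 2 * X ^ 5 * Z ^ 3 * q ^ 2) + r₅ * (- X ^ 4 * Z ^ 5 * q ^ 2)
      + r₆ * (X ^ 3 * Z ^ 6 * q ^ 2) + r₇ * (X ^ 2 * Z ^ 7 * q ^ 3)
      + r₈ * (- X * Z ^ 8 * q ^ 3) + r₉ * (Z ^ 9 * q ^ 3) = 0) :
    ∃ k₁ k₂ k₃ k₄ k₅ k₆ k₇ k₈ k₉ : B, r₀ = q * k₁ ∧ r₁ = X * k₁ + Z * k₂ ∧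
      r₂ = X * k₂ + Z ^ 2 * k₃ ∧ r₃ = - X * k₃ + q * k₄ ∧ r₄ = h * X * k₄ + h * Z ^ 2 * k₅ ∧
      r₅ = - X * k₅ + Z * k₆ ∧ r₆ = X * k₆ + q * Z * k₇ ∧ r₇ = p * k₁ - X * k₇ + Z * k₈ ∧
      r₈ = - 2 * p * k₂ + X * k₈ + Z * k₉ ∧ r₉ = p * Z * k₃ + X * k₉ := by
  obtain ⟨k₁, rfl⟩ := hq.dvd 9 r₀ ⟨- (r₁ * (- X ^ 8 - X * Z ^ 7 * p * q ^ 2)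
    + r₂ * (X ^ 7 * Z - Z ^ 8 * p * q ^ 2) + r₃ * (X ^ 6 * Z ^ 3)
    + r₄ * (- 2 * X ^ 5 * Z ^ 3 * q) + r₅ * (- X ^ 4 * Z ^ 5 * q)
    + r₆ * (X ^ 3 * Z ^ 6 * q) + r₇ * (X ^ 2 * Z ^ 7 * q ^ 2)
    + r₈ * (- X * Z ^ 8 * q ^ 2) + r₉ * (Z ^ 9 * q ^ 2)), by linear_combination H⟩
  have H₁ := hq.eq_zero ((r₁ - X * k₁) * (- X ^ 8 - X * Z ^ 7 * p * q ^ 2)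
    + r₂ * (X ^ 7 * Z - Z ^ 8 * p * q ^ 2) + r₃ * (X ^ 6 * Z ^ 3)
    + r₄ * (- 2 * X ^ 5 * Z ^ 3 * q) + r₅ * (- X ^ 4 * Z ^ 5 * q)
    + r₆ * (X ^ 3 * Z ^ 6 * q) + (r₇ - p * k₁) * (X ^ 2 * Z ^ 7 * q ^ 2)
    + r₈ * (- X * Z ^ 8 * q ^ 2) + r₉ * (Z ^ 9 * q ^ 2)) (by linear_combination H)
  obtain ⟨k₂, hk₂⟩ := hZ.dvd 8 (r₁ - X * k₁) ⟨(r₁ - X * k₁) * (- X * Z ^ 6 * p * q ^ 2)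
    + r₂ * (X ^ 7 - Z ^ 7 * p * q ^ 2) + r₃ * (X ^ 6 * Z ^ 2)
    + r₄ * (- 2 * X ^ 5 * Z ^ 2 * q) + r₅ * (- X ^ 4 * Z ^ 4 * q)
    + r₆ * (X ^ 3 * Z ^ 5 * q) + (r₇ - p * k₁) * (X ^ 2 * Z ^ 6 * q ^ 2)
    + r₈ * (- X * Z ^ 7 * q ^ 2) + r₉ * (Z ^ 8 * q ^ 2), by linear_combination - H₁⟩
  have H₂ := hZ.eq_zero ((r₂ - X * k₂) * (X ^ 7 - Z ^ 7 * p * q ^ 2) + r₃ * (X ^ 6 * Z ^ 2)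
    + r₄ * (- 2 * X ^ 5 * Z ^ 2 * q) + r₅ * (- X ^ 4 * Z ^ 4 * q)
    + r₆ * (X ^ 3 * Z ^ 5 * q) + (r₇ - p * k₁) * (X ^ 2 * Z ^ 6 * q ^ 2)
    + (r₈ + 2 * p * k₂) * (- X * Z ^ 7 * q ^ 2) + r₉ * (Z ^ 8 * q ^ 2))
    (by linear_combination H₁ + (X ^ 8 + X * Z ^ 7 * p * q ^ 2) * hk₂)
  obtain ⟨k₃, hk₃⟩ := hZ2.dvd 7 (r₂ - X * k₂) ⟨(r₂ - X * k₂) * (Z ^ 5 * p * q ^ 2)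
    - (r₃ * X ^ 6 + r₄ * (- 2 * X ^ 5 * q) + r₅ * (- X ^ 4 * Z ^ 2 * q)
    + r₆ * (X ^ 3 * Z ^ 3 * q) + (r₇ - p * k₁) * (X ^ 2 * Z ^ 4 * q ^ 2)
    + (r₈ + 2 * p * k₂) * (- X * Z ^ 5 * q ^ 2) + r₉ * (Z ^ 6 * q ^ 2)),
    by linear_combination H₂⟩
  have H₃ := hZ2.eq_zero ((r₃ + X * k₃) * X ^ 6 + r₄ * (- 2 * X ^ 5 * q)
    + r₅ * (- X ^ 4 * Z ^ 2 * q) + r₆ * (X ^ 3 * Z ^ 3 * q)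
    + (r₇ - p * k₁) * (X ^ 2 * Z ^ 4 * q ^ 2) + (r₈ + 2 * p * k₂) * (- X * Z ^ 5 * q ^ 2)
    + (r₉ - p * Z * k₃) * (Z ^ 6 * q ^ 2))
    (by linear_combination H₂ - (X ^ 7 - Z ^ 7 * p * q ^ 2) * hk₃)
  obtain ⟨k₄, hk₄⟩ := hq.dvd 6 (r₃ + X * k₃) ⟨- (r₄ * (- 2 * X ^ 5) + r₅ * (- X ^ 4 * Z ^ 2)
    + r₆ * (X ^ 3 * Z ^ 3) + (r₇ - p * k₁) * (X ^ 2 * Z ^ 4 * q)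
    + (r₈ + 2 * p * k₂) * (- X * Z ^ 5 * q) + (r₉ - p * Z * k₃) * (Z ^ 6 * q)),
    by linear_combination H₃⟩
  have H₄ := hq.eq_zero ((2 * r₄ - X * k₄) * (- X ^ 5) + r₅ * (- X ^ 4 * Z ^ 2)
    + r₆ * (X ^ 3 * Z ^ 3) + (r₇ - p * k₁) * (X ^ 2 * Z ^ 4 * q)
    + (r₈ + 2 * p * k₂) * (- X * Z ^ 5 * q) + (r₉ - p * Z * k₃) * (Z ^ 6 * q))
    (by linear_combination H₃ - X ^ 6 * hk₄)
  obtain ⟨k₅, hk₅⟩ := hZ2.dvd 5 (2 * r₄ - X * k₄) ⟨r₅ * (- X ^ 4)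
    + r₆ * (X ^ 3 * Z) + (r₇ - p * k₁) * (X ^ 2 * Z ^ 2 * q)
    + (r₈ + 2 * p * k₂) * (- X * Z ^ 3 * q) + (r₉ - p * Z * k₃) * (Z ^ 4 * q),
    by linear_combination - H₄⟩
  have H₅ := hZ2.eq_zero ((r₅ + X * k₅) * (- X ^ 4) + r₆ * (X ^ 3 * Z)
    + (r₇ - p * k₁) * (X ^ 2 * Z ^ 2 * q) + (r₈ + 2 * p * k₂) * (- X * Z ^ 3 * q)
    + (r₉ - p * Z * k₃) * (Z ^ 4 * q))
    (by linear_combination H₄ + X ^ 5 * hk₅)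
  obtain ⟨k₆, hk₆⟩ := hZ.dvd 4 (r₅ + X * k₅) ⟨r₆ * X ^ 3
    + (r₇ - p * k₁) * (X ^ 2 * Z * q) + (r₈ + 2 * p * k₂) * (- X * Z ^ 2 * q)
    + (r₉ - p * Z * k₃) * (Z ^ 3 * q), by linear_combination - H₅⟩
  have H₆ := hZ.eq_zero ((r₆ - X * k₆) * X ^ 3 + (r₇ - p * k₁) * (X ^ 2 * Z * q)
    + (r₈ + 2 * p * k₂) * (- X * Z ^ 2 * q) + (r₉ - p * Z * k₃) * (Z ^ 3 * q))
    (by linear_combination H₅ + X ^ 4 * hk₆)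
  obtain ⟨k₇, hk₇⟩ := hqZ.dvd 3 (r₆ - X * k₆) ⟨- ((r₇ - p * k₁) * X ^ 2
    + (r₈ + 2 * p * k₂) * (- X * Z) + (r₉ - p * Z * k₃) * Z ^ 2), by linear_combination H₆⟩
  have H₇ := hqZ.eq_zero ((r₇ - p * k₁ + X * k₇) * X ^ 2 + (r₈ + 2 * p * k₂) * (- X * Z)
    + (r₉ - p * Z * k₃) * Z ^ 2) (by linear_combination H₆ - X ^ 3 * hk₇)
  obtain ⟨k₈, hk₈⟩ := hZ.dvd 2 (r₇ - p * k₁ + X * k₇) ⟨(r₈ + 2 * p * k₂) * X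
    - (r₉ - p * Z * k₃) * Z, by linear_combination H₇⟩
  have H₈ := hZ.eq_zero ((r₈ + 2 * p * k₂ - X * k₈) * (- X) + (r₉ - p * Z * k₃) * Z)
    (by linear_combination H₇ - X ^ 2 * hk₈)
  obtain ⟨k₉, hk₉⟩ := hZ.dvd 1 (r₈ + 2 * p * k₂ - X * k₈) ⟨r₉ - p * Z * k₃,
    by linear_combination - H₈⟩
  have H₉ := hZ.eq_zero (r₉ - p * Z * k₃ - X * k₉) (by linear_combination H₈ + X * hk₉)
  exact ⟨k₁, k₂, k₃, k₄, k₅, k₆, k₇, k₈, k₉, rfl, by linear_combination hk₂,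
    by linear_combination hk₃, by linear_combination hk₄,
    by linear_combination h * hk₅ - r₄ * h2, by linear_combination hk₆,
    by linear_combination hk₇, by linear_combination hk₈, by linear_combination hk₉,
    by linear_combination H₉⟩

namespace MinorData

section Lifting

variable {R : Type*} [CommRing R] {X Y Z p q a b c d e f : R}
  (D : MinorData X Y Z p q a b c d e f)
include D

lemma exists_coefficients_of_dvd {B : Type*} [CommRing B] {π : R →+* B}
    (hπ : Function.Surjective π) {y h : R} (hker : ∀ s, π s = 0 ↔ y ∣ s) (hyY : y ∣ Y)
    (h2 : 2 * h = 1) (hu : ∀ u ∈ ({q, Z, Z ^ 2, q * Z} : Set R), RegularPair (π u) (π X))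
    (r₀ r₁ r₂ r₃ r₄ r₅ r₆ r₇ r₈ r₉ : R)
    (H : y ∣ r₀ * b ^ 3 + r₁ * d + r₂ * f + r₃ * (a * b ^ 2) + r₄ * e + r₅ * (a * b * c)
      + r₆ * (a ^ 2 * b) + r₇ * (a * c ^ 2) + r₈ * (a ^ 2 * c) + r₉ * a ^ 3) :
    ∃ k₁ k₂ k₃ k₄ k₅ k₆ k₇ k₈ k₉ t₀ t₁ t₂ t₃ t₄ t₅ t₆ t₇ t₈ t₉ : R,
      r₀ = (q * k₁ - Y * k₃) + y * t₀ ∧ r₁ = (X * k₁ + Z * k₂ - h * Y * k₄) + y * t₁ ∧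
      r₂ = (X * k₂ + Z ^ 2 * k₃ + h * Y * Z * k₅ - h * Y ^ 2 * k₇) + y * t₂ ∧
      r₃ = (- X * k₃ + q * k₄ + Y * k₆) + y * t₃ ∧
      r₄ = (h * X * k₄ + h * Z ^ 2 * k₅ - h * Y * Z * k₇) + y * t₄ ∧
      r₅ = (- X * k₅ + Z * k₆ + Y * k₈) + y * t₅ ∧
      r₆ = (X * k₆ + q * Z * k₇ + Y * k₉) + y * t₆ ∧
      r₇ = (p * k₁ - X * k₇ + Z * k₈) + y * t₇ ∧
      r₈ = (- 2 * p * k₂ + X * k₈ + Z * k₉) + y * t₈ ∧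
      r₉ = (p * Z * k₃ + p * Y * k₅ + X * k₉) + y * t₉ := by
  have hY : π Y = 0 := (hker Y).2 hyY
  have h2' : 2 * π h = 1 := by rw [← map_ofNat π 2, ← map_mul, h2, map_one]
  have H' := (hker _).2 H
  obtain ⟨rfl, rfl, rfl, rfl, rfl, rfl⟩ := D
  simp only [map_add, map_sub, map_mul, map_pow, map_neg, map_ofNat, hY] at H'
  obtain ⟨k₁, k₂, k₃, k₄, k₅, k₆, k₇, k₈, k₉, e₀, e₁, e₂, e₃, e₄, e₅, e₆, e₇, e₈, e₉⟩ :=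
    exists_coefficients_of_monomial_relation (p := π p) h2' (hu q (by simp)) (hu Z (by simp))
      (map_pow π Z 2 ▸ hu (Z ^ 2) (by simp)) (map_mul π q Z ▸ hu (q * Z) (by simp))
      (π r₀) (π r₁) (π r₂) (π r₃) (π r₄) (π r₅) (π r₆) (π r₇) (π r₈) (π r₉)
      (by linear_combination H')
  obtain ⟨k₁, rfl⟩ := hπ k₁
  obtain ⟨k₂, rfl⟩ := hπ k₂
  obtain ⟨k₃, rfl⟩ := hπ k₃
  obtain ⟨k₄, rfl⟩ := hπ k₄
  obtain ⟨k₅, rfl⟩ := hπ k₅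
  obtain ⟨k₆, rfl⟩ := hπ k₆
  obtain ⟨k₇, rfl⟩ := hπ k₇
  obtain ⟨k₈, rfl⟩ := hπ k₈
  obtain ⟨k₉, rfl⟩ := hπ k₉
  have lift : ∀ s t, π s = π t → ∃ w, s = t + y * w := fun s t hst => by
    obtain ⟨w, hw⟩ := (hker (s - t)).1 (by rw [map_sub, hst, sub_self])
    exact ⟨w, by linear_combination hw⟩
  obtain ⟨t₀, h₀⟩ := lift r₀ (q * k₁ - Y * k₃) (by simp [hY, e₀])
  obtain ⟨t₁, h₁⟩ := lift r₁ (X * k₁ + Z * k₂ - h * Y * k₄) (by simp [hY, e₁])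
  obtain ⟨t₂, h₂⟩ := lift r₂ (X * k₂ + Z ^ 2 * k₃ + h * Y * Z * k₅ - h * Y ^ 2 * k₇)
    (by simp [hY, e₂])
  obtain ⟨t₃, h₃⟩ := lift r₃ (- X * k₃ + q * k₄ + Y * k₆) (by simp [hY, e₃])
  obtain ⟨t₄, h₄⟩ := lift r₄ (h * X * k₄ + h * Z ^ 2 * k₅ - h * Y * Z * k₇)
    (by simp [hY, e₄])
  obtain ⟨t₅, h₅⟩ := lift r₅ (- X * k₅ + Z * k₆ + Y * k₈) (by simp [hY, e₅])
  obtain ⟨t₆, h₆⟩ := lift r₆ (X * k₆ + q * Z * k₇ + Y * k₉) (by simp [hY, e₆])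
  obtain ⟨t₇, h₇⟩ := lift r₇ (p * k₁ - X * k₇ + Z * k₈) (by simp [e₇])
  obtain ⟨t₈, h₈⟩ := lift r₈ (- 2 * p * k₂ + X * k₈ + Z * k₉)
    (by simp only [e₈, map_add, map_mul, map_neg, map_ofNat])
  obtain ⟨t₉, h₉⟩ := lift r₉ (p * Z * k₃ + p * Y * k₅ + X * k₉) (by simp [hY, e₉])
  exact ⟨k₁, k₂, k₃, k₄, k₅, k₆, k₇, k₈, k₉, t₀, t₁, t₂, t₃, t₄, t₅, t₆, t₇, t₈, t₉,
    h₀, h₁, h₂, h₃, h₄, h₅, h₆, h₇, h₈, h₉⟩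

end Lifting

end MinorData

lemma Ideal.exists_of_mem_span_triple_pow_three {R : Type*} [CommRing R] {a b c u : R}
    (hu : u ∈ Ideal.span {a, b, c} ^ 3) :
    ∃ s₀ s₁ s₂ s₃ s₄ s₅ s₆ s₇ s₈ s₉ : R, u = s₀ * b ^ 3 + s₁ * c ^ 3 + s₂ * (b ^ 2 * c)
      + s₃ * (a * b ^ 2) + s₄ * (b * c ^ 2) + s₅ * (a * b * c) + s₆ * (a ^ 2 * b)
      + s₇ * (a * c ^ 2) + s₈ * (a ^ 2 * c) + s₉ * a ^ 3 := by
  have triple : ∀ v : R, v ∈ Ideal.span {a, b, c} → ∃ l m n, v = l * a + m * b + n * c := by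
    intro v hv
    obtain ⟨l, m, n, h⟩ := Submodule.mem_span_triple.1 hv
    exact ⟨l, m, n, by simpa using h.symm⟩
  rw [pow_three] at hu
  induction hu using Submodule.mul_induction_on' with
  | mem_mul_mem v hv w hw =>
    obtain ⟨l, m, n, rfl⟩ := triple v hv
    induction hw using Submodule.mul_induction_on' with
    | mem_mul_mem v' hv' w' hw' =>
      obtain ⟨l', m', n', rfl⟩ := triple v' hv'
      obtain ⟨l'', m'', n'', rfl⟩ := triple w' hw'
      refine ⟨m * m' * m'', n * n' * n'', m * m' * n'' + m * n' * m'' + n * m' * m'',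
        l * m' * m'' + m * l' * m'' + m * m' * l'', m * n' * n'' + n * m' * n'' + n * n' * m'',
        l * m' * n'' + l * n' * m'' + m * l' * n'' + m * n' * l'' + n * l' * m'' + n * m' * l'',
        l * l' * m'' + l * m' * l'' + m * l' * l'', l * n' * n'' + n * l' * n'' + n * n' * l'',
        l * l' * n'' + l * n' * l'' + n * l' * l'', l * l' * l'', by ring⟩
    | add v _ w _ hv hw =>
      obtain ⟨s₀, s₁, s₂, s₃, s₄, s₅, s₆, s₇, s₈, s₉, h⟩ := hv
      obtain ⟨t₀, t₁, t₂, t₃, t₄, t₅, t₆, t₇, t₈, t₉, h'⟩ := hw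
      exact ⟨s₀ + t₀, s₁ + t₁, s₂ + t₂, s₃ + t₃, s₄ + t₄, s₅ + t₅, s₆ + t₆, s₇ + t₇, s₈ + t₈,
        s₉ + t₉, by linear_combination h + h'⟩
  | add v _ w _ hv hw =>
    obtain ⟨s₀, s₁, s₂, s₃, s₄, s₅, s₆, s₇, s₈, s₉, h⟩ := hv
    obtain ⟨t₀, t₁, t₂, t₃, t₄, t₅, t₆, t₇, t₈, t₉, h'⟩ := hw
    exact ⟨s₀ + t₀, s₁ + t₁, s₂ + t₂, s₃ + t₃, s₄ + t₄, s₅ + t₅, s₆ + t₆, s₇ + t₇, s₈ + t₈,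
      s₉ + t₉, by linear_combination h + h'⟩

/-- The submodule of `R³` generated by `(X, 0, 0)`, `(0, Y, 0)`, `(0, 0, Z)`, `(Y, -X, 0)`,
`(Z, 0, X)` and `(0, Z, -Y)`. -/
def relationModule {R : Type*} [CommRing R] (X Y Z : R) : Submodule R (Fin 3 → R) :=
  LinearMap.range (Matrix.mulVecLin !![X, 0, 0, Y, Z, 0; 0, Y, 0, -X, 0, Z; 0, 0, Z, 0, X, -Y])

lemma mem_relationModule {R : Type*} [CommRing R] {X Y Z : R} {r : Fin 3 → R} :
    r ∈ relationModule X Y Z ↔ ∃ s₁ s₂ s₃ s₄ s₅ s₆ : R, r 0 = s₁ * X + s₄ * Y + s₅ * Z ∧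
      r 1 = s₂ * Y - s₄ * X + s₆ * Z ∧ r 2 = s₃ * Z + s₅ * X - s₆ * Y := by
  constructor
  · rintro ⟨s, rfl⟩
    refine ⟨s 0, s 1, s 2, s 3, s 4, s 5, ?_, ?_, ?_⟩ <;>
      simp [Matrix.mulVec, dotProduct, Fin.sum_univ_six] <;> ring
  · rintro ⟨s₁, s₂, s₃, s₄, s₅, s₆, h₁, h₂, h₃⟩
    refine ⟨![s₁, s₂, s₃, s₄, s₅, s₆], funext fun i => ?_⟩
    fin_cases i <;> simp [Matrix.mulVec, dotProduct, Fin.sum_univ_six, h₁, h₂, h₃] <;> ring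

namespace MinorData

section Ideals

variable {R : Type*} [CommRing R] {X Y Z p q a b c d e f : R}
  (D : MinorData X Y Z p q a b c d e f)
include D

lemma exists_of_mem_pow_three {h : R} (h2 : 2 * h = 1) {u : R}
    (hu : u ∈ Ideal.span {a, b, c} ^ 3) :
    ∃ s₀ s₁ s₂ s₃ s₄ s₅ s₆ s₇ s₈ s₉ : R, u = s₀ * b ^ 3 + (h * Y * s₄ - Z * s₂) * f
      + s₃ * (a * b ^ 2) + (Y * s₁ - h * Z * s₄) * e + s₅ * (a * b * c) + s₆ * (a ^ 2 * b)
      + s₇ * (a * c ^ 2) + s₈ * (a ^ 2 * c) + s₉ * a ^ 3 := by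
  obtain ⟨s₀, s₁, s₂, s₃, s₄, s₅, s₆, s₇, s₈, s₉, rfl⟩ :=
    Ideal.exists_of_mem_span_triple_pow_three hu
  refine ⟨s₀, s₁, s₂, s₃, s₄, s₅, s₆ - q * s₁, s₇, s₈, s₉ - p * s₂, ?_⟩
  linear_combination - s₁ * D.Y_mul_e + s₂ * D.Z_mul_f + h * s₄ * D.Z_mul_e_sub
    - s₄ * b * c ^ 2 * h2

variable {B : Type*} [CommRing B] {π : R →+* B} (hπ : Function.Surjective π) {y h : R}
  (hker : ∀ s, π s = 0 ↔ y ∣ s) (hyY : y ∣ Y) (h2 : 2 * h = 1)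
  (hu : ∀ u ∈ ({q, Z, Z ^ 2, q * Z} : Set R), RegularPair (π u) (π X))
  (hy : ∀ r, y * r = 0 → r = 0)
include hπ hker hyY h2 hu hy

/-- `y` is a nonzerodivisor modulo `(a, b, c)³ + (d, e, f)`. -/
lemma mem_of_mul_mem {u : R}
    (hyu : y * u ∈ Ideal.span {a, b, c} ^ 3 ⊔ Ideal.span {d, e, f}) :
    u ∈ Ideal.span {a, b, c} ^ 3 ⊔ Ideal.span {d, e, f} := by
  obtain ⟨v, hv, w, hw, hvw⟩ := Submodule.mem_sup.1 hyu
  obtain ⟨w₁, w₂, w₃, rfl⟩ := Submodule.mem_span_triple.1 hw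
  obtain ⟨s₀, s₁, s₂, s₃, s₄, s₅, s₆, s₇, s₈, s₉, rfl⟩ := D.exists_of_mem_pow_three h2 hv
  simp only [smul_eq_mul] at hvw
  obtain ⟨k₁, k₂, k₃, k₄, k₅, k₆, k₇, k₈, k₉, t₀, t₁, t₂, t₃, t₄, t₅, t₆, t₇, t₈, t₉,
    e₀, e₁, e₂, e₃, e₄, e₅, e₆, e₇, e₈, e₉⟩ := D.exists_coefficients_of_dvd hπ hker hyY h2 hu
    s₀ w₁ (w₃ + (h * Y * s₄ - Z * s₂)) s₃ (w₂ + (Y * s₁ - h * Z * s₄)) s₅ s₆ s₇ s₈ s₉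
    ⟨u, by linear_combination hvw⟩
  have key : u = (t₀ * b ^ 3 + t₃ * (a * b ^ 2) + t₅ * (a * b * c) + t₆ * (a ^ 2 * b)
      + t₇ * (a * c ^ 2) + t₈ * (a ^ 2 * c) + t₉ * a ^ 3) + (t₁ * d + t₄ * e + t₂ * f) := by
    refine sub_eq_zero.1 (hy _ ?_)
    linear_combination - hvw + D.combination_eq_zero h2 k₁ k₂ k₃ k₄ k₅ k₆ k₇ k₈ k₉
      + b ^ 3 * e₀ + d * e₁ + f * e₂ + a * b ^ 2 * e₃ + e * e₄ + a * b * c * e₅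
      + a ^ 2 * b * e₆ + a * c ^ 2 * e₇ + a ^ 2 * c * e₈ + a ^ 3 * e₉
  have ha : a ∈ Ideal.span {a, b, c} := Ideal.subset_span (by simp)
  have hb : b ∈ Ideal.span {a, b, c} := Ideal.subset_span (by simp)
  have hc : c ∈ Ideal.span {a, b, c} := Ideal.subset_span (by simp)
  have cube : ∀ u v w, u ∈ Ideal.span {a, b, c} → v ∈ Ideal.span {a, b, c} →
      w ∈ Ideal.span {a, b, c} → ∀ t, t * (u * (v * w)) ∈ Ideal.span {a, b, c} ^ 3 :=
    fun u v w hu hv hw t => Ideal.mul_mem_left _ _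
      (pow_three (Ideal.span {a, b, c}) ▸ Ideal.mul_mem_mul hu (Ideal.mul_mem_mul hv hw))
  rw [key]
  refine Submodule.add_mem_sup ?_ ?_
  · convert add_mem (add_mem (add_mem (add_mem (add_mem (add_mem (cube b b b hb hb hb t₀)
      (cube a b b ha hb hb t₃)) (cube a b c ha hb hc t₅)) (cube a a b ha ha hb t₆))
      (cube a c c ha hc hc t₇)) (cube a a c ha ha hc t₈)) (cube a a a ha ha ha t₉) using 1
    ring
  · exact Submodule.mem_span_triple.2 ⟨t₁, t₄, t₂, rfl⟩

/-- The relations between `d, e, f` modulo `(a, b, c)³`. -/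
lemma combination_mem_pow_three_iff [IsNoetherianRing R] [IsLocalRing R]
    (hym : y ∈ maximalIdeal R) {r : Fin 3 → R} :
    r 0 * d + r 1 * e + r 2 * f ∈ Ideal.span {a, b, c} ^ 3 ↔ r ∈ relationModule X Y Z := by
  have ha : a ∈ Ideal.span {a, b, c} := Ideal.subset_span (by simp)
  have hb : b ∈ Ideal.span {a, b, c} := Ideal.subset_span (by simp)
  have hc : c ∈ Ideal.span {a, b, c} := Ideal.subset_span (by simp)
  have cube : ∀ u v w, u ∈ Ideal.span {a, b, c} → v ∈ Ideal.span {a, b, c} →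
      w ∈ Ideal.span {a, b, c} → ∀ t, t * (u * (v * w)) ∈ Ideal.span {a, b, c} ^ 3 :=
    fun u v w hu hv hw t => Ideal.mul_mem_left _ _
      (pow_three (Ideal.span {a, b, c}) ▸ Ideal.mul_mem_mul hu (Ideal.mul_mem_mul hv hw))
  constructor
  · let T : Submodule R (Fin 3 → R) := Submodule.comap (Fintype.linearCombination R ![d, e, f])
      (Ideal.span {a, b, c} ^ 3 : Ideal R)
    have memT : ∀ r, r ∈ T ↔ r 0 * d + r 1 * e + r 2 * f ∈ Ideal.span {a, b, c} ^ 3 := by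
      intro r
      simp [T, Fintype.linearCombination_apply, Fin.sum_univ_three]
    suffices T ≤ relationModule X Y Z from fun hr => this ((memT r).2 hr)
    refine Submodule.le_of_le_smul_of_le_jacobson_bot (I := Ideal.span {y})
      (IsNoetherian.noetherian _) ?_ fun r hr => ?_
    · rw [IsLocalRing.jacobson_eq_maximalIdeal ⊥ bot_ne_top]
      simpa [Ideal.span_le] using hym
    obtain ⟨s₀, s₁, s₂, s₃, s₄, s₅, s₆, s₇, s₈, s₉, hs⟩ :=
      D.exists_of_mem_pow_three h2 ((memT r).1 hr)
    obtain ⟨k₁, k₂, k₃, k₄, k₅, k₆, k₇, k₈, k₉, t₀, t₁, t₂, t₃, t₄, t₅, t₆, t₇, t₈, t₉,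
      e₀, e₁, e₂, e₃, e₄, e₅, e₆, e₇, e₈, e₉⟩ := D.exists_coefficients_of_dvd hπ hker hyY h2 hu
      (- s₀) (r 0) (r 2 - (h * Y * s₄ - Z * s₂)) (- s₃) (r 1 - (Y * s₁ - h * Z * s₄)) (- s₅)
      (- s₆) (- s₇) (- s₈) (- s₉) ⟨0, by linear_combination hs⟩
    have key : t₁ * d + t₄ * e + t₂ * f = (- t₀) * (b * (b * b)) + (- t₃) * (a * (b * b))
        + (- t₅) * (a * (b * c)) + (- t₆) * (a * (a * b)) + (- t₇) * (a * (c * c))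
        + (- t₈) * (a * (a * c)) + (- t₉) * (a * (a * a)) := by
      refine sub_eq_zero.1 (hy _ ?_)
      linear_combination hs - D.combination_eq_zero h2 k₁ k₂ k₃ k₄ k₅ k₆ k₇ k₈ k₉
        - b ^ 3 * e₀ - d * e₁ - f * e₂ - a * b ^ 2 * e₃ - e * e₄ - a * b * c * e₅
        - a ^ 2 * b * e₆ - a * c ^ 2 * e₇ - a ^ 2 * c * e₈ - a ^ 3 * e₉
    have ht : ![t₁, t₄, t₂] ∈ T := by
      rw [memT]
      simp only [Matrix.cons_val, key]
      exact add_mem (add_mem (add_mem (add_mem (add_mem (add_mem (cube b b b hb hb hb _)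
        (cube a b b ha hb hb _)) (cube a b c ha hb hc _)) (cube a a b ha ha hb _))
        (cube a c c ha hc hc _)) (cube a a c ha ha hc _)) (cube a a a ha ha ha _)
    refine Submodule.mem_sup.2 ⟨r - y • ![t₁, t₄, t₂], ?_, _,
      Submodule.smul_mem_smul (Ideal.mem_span_singleton_self y) ht, sub_add_cancel _ _⟩
    refine mem_relationModule.2 ⟨k₁, s₁ - 2 * h * Z * k₇, Z * k₃ + 2 * h * Y * k₅ - s₂, - h * k₄,
      k₂, h * Z * k₅ - h * s₄ + h * Y * k₇, ?_, ?_, ?_⟩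
    · simp
      linear_combination e₁
    · simp
      linear_combination e₄
    · simp
      linear_combination e₂
  · rintro hr
    obtain ⟨s₁, s₂, s₃, s₄, s₅, s₆, h₀, h₁, h₂⟩ := mem_relationModule.1 hr
    have key : r 0 * d + r 1 * e + r 2 * f = (- s₁ * q) * (b * (b * b))
        + (- s₁ * p) * (a * (c * c)) + s₂ * (c * (c * c)) + (s₂ * q) * (a * (a * b))
        + (- s₃ * p) * (a * (a * a)) + (- s₃) * (b * (b * c)) + (2 * s₄ * q) * (a * (b * b))
        + (2 * s₅ * p) * (a * (a * c)) + (- 2 * s₆) * (b * (c * c)) := by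
      linear_combination d * h₀ + e * h₁ + f * h₂ + s₁ * D.X_mul_d + s₂ * D.Y_mul_e
        + s₃ * D.Z_mul_f + s₄ * D.Y_mul_d_sub + s₅ * D.Z_mul_d_add + s₆ * D.Z_mul_e_sub
    rw [key]
    exact add_mem (add_mem (add_mem (add_mem (add_mem (add_mem (add_mem (add_mem
      (cube b b b hb hb hb _) (cube a c c ha hc hc _)) (cube c c c hc hc hc _))
      (cube a a b ha ha hb _)) (cube a a a ha ha ha _)) (cube b b c hb hb hc _))
      (cube a b b ha hb hb _)) (cube a a c ha ha hc _)) (cube b c c hb hc hc _)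

end Ideals

end MinorData

section SystemOfParameters

variable {R : Type*} [CommRing R]

lemma Ideal.radical_span_triple_pow (x y z : R) {i j k : ℕ} (hi : i ≠ 0) (hj : j ≠ 0)
    (hk : k ≠ 0) :
    (Ideal.span {x ^ i, y ^ j, z ^ k}).radical = (Ideal.span {x, y, z}).radical := by
  apply le_antisymm <;> refine Ideal.radical_le_radical_iff.2 (Ideal.span_le.2 ?_)
  · rintro _ (rfl | rfl | rfl)
    · exact Ideal.le_radical (Ideal.pow_mem_of_mem _ (Ideal.subset_span (by simp)) i (by omega))
    · exact Ideal.le_radical (Ideal.pow_mem_of_mem _ (Ideal.subset_span (by simp)) j (by omega))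
    · exact Ideal.le_radical (Ideal.pow_mem_of_mem _ (Ideal.subset_span (by simp)) k (by omega))
  · rintro _ (rfl | rfl | rfl)
    · exact ⟨i, Ideal.subset_span (by simp)⟩
    · exact ⟨j, Ideal.subset_span (by simp)⟩
    · exact ⟨k, Ideal.subset_span (by simp)⟩

lemma RingTheory.Sequence.IsRegular.triple {u v w : R}
    (h : RingTheory.Sequence.IsRegular R [u, v, w]) :
    (∀ r, u * r = 0 → r = 0) ∧ (∀ r, u ∣ v * r → u ∣ r) ∧
      ∀ r, w * r ∈ Ideal.span {u, v} → r ∈ Ideal.span {u, v} := by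
  have H := (RingTheory.Sequence.isWeaklyRegular_iff _ _).1 h.toIsWeaklyRegular
  refine ⟨fun r hr => ?_, fun r hr => ?_, fun r hr => ?_⟩
  · have := mem_of_isSMulRegular_quotient_of_smul_mem (H 0 (by simp)) (x := r)
    simpa [hr] using this
  · have := mem_of_isSMulRegular_quotient_of_smul_mem (H 1 (by simp)) (x := r)
    simpa [Ideal.mem_span_singleton, hr] using this
  · have := mem_of_isSMulRegular_quotient_of_smul_mem (H 2 (by simp)) (x := r)
    simp only [List.take, Ideal.ofList_cons, Ideal.ofList_nil, smul_eq_mul, Ideal.mul_top,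
      sup_bot_eq, ← Ideal.span_insert] at this
    exact this hr

variable [IsLocalRing R]
  (hCM : ∀ u v w : R, (Ideal.span {u, v, w}).radical = maximalIdeal R →
    RingTheory.Sequence.IsRegular R [u, v, w])
include hCM

lemma regularPair_mk_pow {x y z : R} (hsop : (Ideal.span {y, z, x}).radical = maximalIdeal R)
    (n : ℕ) :
    RegularPair (Ideal.Quotient.mk (Ideal.span {y}) (z ^ n))
      (Ideal.Quotient.mk (Ideal.span {y}) x) := by
  rcases eq_or_ne n 0 with rfl | hn
  · exact ⟨fun r hr => by simpa using hr, fun m r _ => by simp⟩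
  obtain ⟨-, hz, hx⟩ := (hCM y (z ^ n) x (by
    rw [← hsop, ← Ideal.radical_span_triple_pow y z x one_ne_zero hn one_ne_zero, pow_one,
      pow_one])).triple
  refine ⟨fun r hr => ?_, fun m r hr => ?_⟩
  · obtain ⟨r, rfl⟩ := Ideal.Quotient.mk_surjective r
    rw [← map_mul, Ideal.Quotient.eq_zero_iff_dvd] at hr
    exact (Ideal.Quotient.eq_zero_iff_dvd _ _).2 (hz r hr)
  · obtain ⟨r, rfl⟩ := Ideal.Quotient.mk_surjective r
    have mem_iff : ∀ s, Ideal.Quotient.mk (Ideal.span {y}) (z ^ n) ∣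
        Ideal.Quotient.mk (Ideal.span {y}) s ↔ s ∈ Ideal.span {y, z ^ n} := by
      intro s
      rw [Ideal.mem_span_pair]
      constructor
      · rintro ⟨t, ht⟩
        obtain ⟨t, rfl⟩ := Ideal.Quotient.mk_surjective t
        rw [← map_mul, Ideal.Quotient.eq, Ideal.mem_span_singleton] at ht
        obtain ⟨k, hk⟩ := ht
        exact ⟨k, t, by linear_combination - hk⟩
      · rintro ⟨k, t, rfl⟩
        refine ⟨Ideal.Quotient.mk _ t, ?_⟩
        rw [← map_mul, Ideal.Quotient.eq, Ideal.mem_span_singleton]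
        exact ⟨k, by ring⟩
    rw [← map_pow, ← map_mul, mem_iff] at hr
    rw [mem_iff]
    induction m with
    | zero => simpa using hr
    | succ m ih => exact ih (hx _ (by convert hr using 1; ring))

/-- The coefficients of a relation between the elements of a system of parameters lie in the
ideal it generates. -/
lemma mem_span_triple_of_relation {x y z : R}
    (hsop : (Ideal.span {x, y, z}).radical = maximalIdeal R) {r s t : R}
    (h : r * x + s * y + t * z = 0) :
    r ∈ Ideal.span {x, y, z} ∧ s ∈ Ideal.span {x, y, z} ∧ t ∈ Ideal.span {x, y, z} := by
  have hsop₁ : (Ideal.span {y, z, x}).radical = maximalIdeal R := by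
    rw [← hsop, Set.insert_comm x, Set.pair_comm x]
  have hsop₂ : (Ideal.span {x, z, y}).radical = maximalIdeal R := by
    rw [← hsop, Set.pair_comm y]
  refine ⟨?_, ?_, ?_⟩
  · refine Ideal.span_mono ?_ ((hCM _ _ _ hsop₁).triple.2.2 r
      (Ideal.mem_span_pair.2 ⟨- s, - t, by linear_combination - h⟩))
    grind
  · refine Ideal.span_mono ?_ ((hCM _ _ _ hsop₂).triple.2.2 s
      (Ideal.mem_span_pair.2 ⟨- r, - t, by linear_combination - h⟩))
    grind
  · refine Ideal.span_mono ?_ ((hCM _ _ _ hsop).triple.2.2 t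
      (Ideal.mem_span_pair.2 ⟨- r, - s, by linear_combination - h⟩))
    grind

end SystemOfParameters

section Length

variable {R : Type*} [CommRing R] {X Y Z : R}

/-- `(R/(X, Y, Z))³` as a quotient of `R³`. -/
lemma length_quotient_pi_span_triple :
    Module.length R ((Fin 3 → R) ⧸ Submodule.pi Set.univ
      fun _ : Fin 3 => (Ideal.span {X, Y, Z} : Submodule R R)) =
      3 * Module.length R (R ⧸ Ideal.span {X, Y, Z}) := by
  rw [(Submodule.quotientPi fun _ : Fin 3 => (Ideal.span {X, Y, Z} : Submodule R R)).length_eq,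
    Module.length_pi_of_fintype]
  simp

lemma length_quotient_relationModule {h : R} (h2 : 2 * h = 1)
    (hrel : ∀ r s t, r * X + s * Y + t * Z = 0 → r ∈ Ideal.span {X, Y, Z} ∧
      s ∈ Ideal.span {X, Y, Z} ∧ t ∈ Ideal.span {X, Y, Z}) :
    Module.length R ((Fin 3 → R) ⧸ relationModule X Y Z) =
      6 * Module.length R (R ⧸ Ideal.span {X, Y, Z}) := by
  set Q : Ideal R := Ideal.span {X, Y, Z} with hQ
  set P : Submodule R (Fin 3 → R) := Submodule.pi Set.univ fun _ : Fin 3 => (Q : Submodule R R)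
    with hP
  have hX : X ∈ Q := Ideal.subset_span (by simp)
  have hY : Y ∈ Q := Ideal.subset_span (by simp)
  have hZ : Z ∈ Q := Ideal.subset_span (by simp)
  have memP : ∀ r : Fin 3 → R, r ∈ P ↔ r 0 ∈ Q ∧ r 1 ∈ Q ∧ r 2 ∈ Q := by
    intro r
    simp [P, Submodule.mem_pi, Fin.forall_fin_succ]
  have memQ : ∀ r : R, r ∈ Q ↔ ∃ k l m, r = k * X + l * Y + m * Z := by
    intro r
    rw [hQ, Submodule.mem_span_triple]
    simp only [smul_eq_mul, eq_comm]
  set N := relationModule X Y Z with hN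
  let φ : (Fin 3 → R) →ₗ[R] (Fin 3 → R) := Matrix.mulVecLin !![0, -Z, Y; -Z, 0, X; -Y, X, 0]
  have hφ : ∀ r, φ r = ![Y * r 2 - Z * r 1, X * r 2 - Z * r 0, X * r 1 - Y * r 0] := by
    intro r
    refine funext fun i => ?_
    fin_cases i <;> simp [φ, Matrix.mulVec, dotProduct, Fin.sum_univ_three] <;> ring
  have hPN : P ≤ N.comap φ := by
    intro r hr
    obtain ⟨h₀, h₁, h₂⟩ := (memP r).1 hr
    obtain ⟨k₀, l₀, m₀, h₀⟩ := (memQ _).1 h₀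
    obtain ⟨k₁, l₁, m₁, h₁⟩ := (memQ _).1 h₁
    obtain ⟨k₂, l₂, m₂, h₂⟩ := (memQ _).1 h₂
    rw [Submodule.mem_comap, hφ, mem_relationModule]
    refine ⟨- 2 * Z * k₁ + 2 * Y * k₂, - 2 * Z * l₀ + 2 * X * l₂, - 2 * Y * m₀ + 2 * X * m₁,
      Z * k₀ - Z * l₁ - X * k₂ + Y * l₂, - Y * k₀ + X * k₁ - Z * m₁ + Y * m₂,
      Y * l₀ - Z * m₀ - X * l₁ + X * m₂, ?_, ?_, ?_⟩ <;>
      simp only [Matrix.cons_val, h₀, h₁, h₂] <;> ring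
  have hNP : N ≤ P := by
    intro r hr
    obtain ⟨s₁, s₂, s₃, s₄, s₅, s₆, h₀, h₁, h₂⟩ := mem_relationModule.1 hr
    exact (memP r).2 ⟨(memQ _).2 ⟨s₁, s₄, s₅, h₀⟩, (memQ _).2 ⟨- s₄, s₂, s₆, by rw [h₁]; ring⟩,
      (memQ _).2 ⟨s₅, - s₆, s₃, by rw [h₂]; ring⟩⟩
  have hinj : ∀ r, φ r ∈ N → r ∈ P := by
    intro r hr
    rw [hφ, mem_relationModule] at hr
    obtain ⟨s₁, s₂, s₃, s₄, s₅, s₆, h₀, h₁, h₂⟩ := hr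
    simp only [Matrix.cons_val] at h₀ h₁ h₂
    obtain ⟨-, a₂, a₁⟩ := hrel (- s₁) (r 2 - s₄) (- r 1 - s₅) (by linear_combination h₀)
    obtain ⟨b₂, -, b₀⟩ := hrel (r 2 + s₄) (- s₂) (- r 0 - s₆) (by linear_combination h₁)
    obtain ⟨c₁, c₀, -⟩ := hrel (r 1 - s₅) (- r 0 + s₆) (- s₃) (by linear_combination h₂)
    refine (memP r).2 ⟨?_, ?_, ?_⟩
    · convert Q.mul_mem_left (- h) (add_mem b₀ c₀) using 1
      linear_combination - r 0 * h2
    · convert Q.mul_mem_left h (sub_mem c₁ a₁) using 1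
      linear_combination - r 1 * h2
    · convert Q.mul_mem_left h (add_mem a₂ b₂) using 1
      linear_combination - r 2 * h2
  have hrange : ∀ r ∈ P, ∃ t, r - φ t ∈ N := by
    intro r hr
    obtain ⟨h₀, h₁, h₂⟩ := (memP r).1 hr
    obtain ⟨k₀, l₀, m₀, h₀⟩ := (memQ _).1 h₀
    obtain ⟨k₁, l₁, m₁, h₁⟩ := (memQ _).1 h₁
    obtain ⟨k₂, l₂, m₂, h₂⟩ := (memQ _).1 h₂
    refine ⟨![- h * (m₁ + l₂), h * (k₂ - m₀), h * (l₀ + k₁)], mem_relationModule.2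
      ⟨k₀, l₁, m₂, h * (l₀ - k₁), h * (m₀ + k₂), h * (m₁ - l₂), ?_, ?_, ?_⟩⟩ <;>
      simp only [hφ, Pi.sub_apply, Matrix.cons_val]
    · linear_combination h₀ - (l₀ * Y + m₀ * Z) * h2
    · linear_combination h₁ - (k₁ * X + m₁ * Z) * h2
    · linear_combination h₂ - (k₂ * X + l₂ * Y) * h2
  rw [Module.length_eq_add_of_exact (P.mapQ N φ hPN) (Submodule.factor hNP) ?_
    (Submodule.factor_surjective hNP) ?_, length_quotient_pi_span_triple, ← add_mul]
  · rw [← hQ]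
    norm_num
  · rw [← LinearMap.ker_eq_bot, LinearMap.ker_eq_bot']
    intro r hr
    obtain ⟨r, rfl⟩ := Submodule.mkQ_surjective _ r
    simp only [Submodule.mkQ_apply, Submodule.mapQ_apply, Submodule.Quotient.mk_eq_zero] at hr ⊢
    exact hinj r hr
  · intro r
    obtain ⟨r, rfl⟩ := Submodule.mkQ_surjective _ r
    rw [show Submodule.factor hNP (N.mkQ r) = 0 ↔ r ∈ P from Submodule.Quotient.mk_eq_zero P]
    constructor
    · intro hr
      obtain ⟨t, ht⟩ := hrange r hr
      refine ⟨Submodule.Quotient.mk t, ?_⟩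
      rw [Submodule.mapQ_apply, Submodule.mkQ_apply, eq_comm, Submodule.Quotient.eq]
      exact ht
    · rintro ⟨t, ht⟩
      obtain ⟨t, rfl⟩ := Submodule.mkQ_surjective _ t
      rw [Submodule.mkQ_apply, Submodule.mkQ_apply, Submodule.mapQ_apply, eq_comm,
        Submodule.Quotient.eq] at ht
      have h₁ : φ t ∈ P := by
        rw [hφ, memP]
        simp only [Matrix.cons_val]
        exact ⟨sub_mem (Q.mul_mem_right _ hY) (Q.mul_mem_right _ hZ),
          sub_mem (Q.mul_mem_right _ hX) (Q.mul_mem_right _ hZ),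
          sub_mem (Q.mul_mem_right _ hX) (Q.mul_mem_right _ hY)⟩
      simpa using add_mem (hNP ht) h₁

lemma hasLength_iff {M : Type*} [AddCommGroup M] [Module R M] {n : ℕ} :
    HasLength R M n ↔ Module.length R M = n := by
  constructor
  · rintro ⟨s, h₀, h₁, rfl⟩
    exact (Module.length_compositionSeries s h₀ h₁).symm
  · intro h
    obtain ⟨s, h₀, h₁⟩ := isFiniteLength_iff_exists_compositionSeries.1
      (Module.length_ne_top_iff.1 (h ▸ ENat.natCast_ne_top n))
    refine ⟨s, h₀, h₁, ?_⟩
    rw [← Module.length_compositionSeries s h₀ h₁] at h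
    exact_mod_cast h

lemma length_quotient_ne_top [IsNoetherianRing R] [IsLocalRing R] {Q : Ideal R}
    (hQ : Q.radical = maximalIdeal R) : Module.length R (R ⧸ Q) ≠ ⊤ := by
  have : Ring.KrullDimLE 0 (R ⧸ Q) := by
    rw [Ring.krullDimLE_zero_iff]
    intro P hP
    have hmax : maximalIdeal R ≤ P.comap (Ideal.Quotient.mk Q) := by
      rw [← hQ, (Ideal.IsPrime.comap _).radical_le_iff]
      intro r hr
      simp [Ideal.mem_comap, Ideal.Quotient.eq_zero_iff_mem.2 hr]
    have : (P.comap (Ideal.Quotient.mk Q)).IsMaximal := by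
      rw [← (maximalIdeal.isMaximal R).eq_of_le (Ideal.IsPrime.comap _).ne_top hmax]
      infer_instance
    rw [← Ideal.map_comap_of_surjective _ Ideal.Quotient.mk_surjective P]
    exact Ideal.IsMaximal.map_of_surjective_of_ker_le (f := Ideal.Quotient.mk Q)
      Ideal.Quotient.mk_surjective (Ideal.ker_le_comap (Ideal.Quotient.mk Q))
  have : IsArtinianRing (R ⧸ Q) := isArtinianRing_iff_krullDimLE_zero.2 this
  have : IsArtinian R (R ⧸ Q) :=
    isArtinian_of_surjective_algebraMap (Ideal.Quotient.mk_surjective (I := Q))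
  rw [Module.length_ne_top_iff, isFiniteLength_iff_isNoetherian_isArtinian]
  exact ⟨inferInstance, inferInstance⟩

lemma length_quotient_pow_three {a b c d e f : R} {K : Ideal R}
    (hK : K = Ideal.span {a, b, c} ^ 3 ⊔ Ideal.span {d, e, f})
    (hrel : ∀ r : Fin 3 → R, r 0 * d + r 1 * e + r 2 * f ∈ Ideal.span {a, b, c} ^ 3 ↔
      r ∈ relationModule X Y Z) :
    Module.length R (K ⧸ Submodule.comap K.subtype (Ideal.span {a, b, c} ^ 3 : Ideal R)) =
      Module.length R ((Fin 3 → R) ⧸ relationModule X Y Z) := by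
  have hmem : ∀ r : Fin 3 → R, Fintype.linearCombination R ![d, e, f] r =
      r 0 * d + r 1 * e + r 2 * f := by
    intro r
    simp [Fintype.linearCombination_apply, Fin.sum_univ_three]
  let ψ : (Fin 3 → R) →ₗ[R] K := (Fintype.linearCombination R ![d, e, f]).codRestrict K
    fun r => by
      rw [hmem, hK]
      exact Submodule.mem_sup_right (Submodule.mem_span_triple.2 ⟨_, _, _, rfl⟩)
  let χ := (Submodule.comap K.subtype (Ideal.span {a, b, c} ^ 3 : Ideal R)).mkQ ∘ₗ ψ
  have hker : LinearMap.ker χ = relationModule X Y Z := by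
    ext r
    rw [LinearMap.mem_ker, ← hrel, LinearMap.comp_apply, Submodule.mkQ_apply,
      Submodule.Quotient.mk_eq_zero, ← hmem]
    rfl
  have hsurj : Function.Surjective χ := by
    intro u
    obtain ⟨⟨u, hu⟩, rfl⟩ := Submodule.mkQ_surjective _ u
    obtain ⟨v, hv, w, hw, rfl⟩ := Submodule.mem_sup.1 (hK ▸ hu)
    obtain ⟨w₁, w₂, w₃, rfl⟩ := Submodule.mem_span_triple.1 hw
    refine ⟨![w₁, w₂, w₃], ?_⟩
    rw [LinearMap.comp_apply, Submodule.mkQ_apply, Submodule.mkQ_apply, eq_comm,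
      Submodule.Quotient.eq, Submodule.mem_comap]
    convert hv using 1
    simp [ψ, hmem]
  rw [← hker]
  exact (χ.quotKerEquivOfSurjective hsurj).length_eq.symm

end Length

section Symbolic

variable {R : Type*} [CommRing R] {I : Ideal R} {n : ℕ} {u : R}

lemma mem_symbolicPower :
    u ∈ symbolicPower I n ↔ ∀ P ∈ I.minimalPrimes, ∃ s ∉ P, s * u ∈ I ^ n := by
  simp only [symbolicPower, Submodule.mem_iInf, Subtype.forall]
  refine forall₂_congr fun P hP => ?_
  have : P.IsPrime := hP.isPrime
  rw [Ideal.mem_comap, IsLocalization.algebraMap_mem_map_algebraMap_iff P.primeCompl]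
  rfl

/-- In dimension one modulo `I`, the symbolic power is a saturation with respect to a parameter. -/
lemma mem_symbolicPower_iff_exists_pow_mul_mem [IsNoetherianRing R] [IsLocalRing R] {y : R}
    (hy : y ∈ maximalIdeal R) (hI : ∀ P : Ideal R, P.IsPrime → I ≤ P → y ∈ P → P = maximalIdeal R)
    (hm : maximalIdeal R ∉ I.minimalPrimes) :
    u ∈ symbolicPower I n ↔ ∃ N, y ^ N * u ∈ I ^ n := by
  rw [mem_symbolicPower]
  constructor
  · intro hu
    suffices y ∈ (Submodule.colon (I ^ n) {u}).radical by
      obtain ⟨N, hN⟩ := this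
      exact ⟨N, Submodule.mem_colon_singleton.1 hN⟩
    rw [Ideal.radical_eq_sInf, Submodule.mem_sInf]
    rintro P ⟨hP, hPprime⟩
    by_contra hyP
    have hIP : I ≤ P := by
      rw [← hPprime.pow_le_iff (n := n + 1) (by omega)]
      refine le_trans (Ideal.pow_le_pow_right (Nat.le_succ n)) fun s hs => hP ?_
      exact Submodule.mem_colon_singleton.2 (Ideal.mul_mem_right _ _ hs)
    obtain ⟨P₀, hP₀, hP₀P⟩ := Ideal.exists_minimalPrimes_le hIP
    have := hP₀.isPrime
    obtain ⟨s, hs, hsu⟩ := hu P₀ hP₀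
    have hsP : s ∈ P := hP (Submodule.mem_colon_singleton.2 hsu)
    have hmin : maximalIdeal R ∈ (P₀ ⊔ Ideal.span {y}).minimalPrimes := by
      refine ⟨⟨inferInstance, sup_le (IsLocalRing.le_maximalIdeal_of_isPrime P₀) ?_⟩,
        fun P' hP' _ => ?_⟩
      · simpa [Ideal.span_le] using hy
      · exact (hI P' hP'.1 (hP₀.1.2.trans (le_sup_left.trans hP'.2))
          (hP'.2 (Ideal.mem_sup_right (Ideal.mem_span_singleton_self y)))).ge
    have hlt := Ideal.map_height_le_one_of_mem_minimalPrimes hmin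
    have hker : RingHom.ker (Ideal.Quotient.mk P₀) ≤ P := by rwa [Ideal.mk_ker]
    have hPm : P ≤ maximalIdeal R := IsLocalRing.le_maximalIdeal_of_isPrime P
    have hPmap : (Ideal.map (Ideal.Quotient.mk P₀) P).IsPrime :=
      Ideal.map_isPrime_of_surjective Ideal.Quotient.mk_surjective hker
    have hmmap : (Ideal.map (Ideal.Quotient.mk P₀) (maximalIdeal R)).IsPrime :=
      Ideal.map_isPrime_of_surjective Ideal.Quotient.mk_surjective (hker.trans hPm)
    have hcomap : ∀ P' : Ideal R, P₀ ≤ P' →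
        (P'.map (Ideal.Quotient.mk P₀)).comap (Ideal.Quotient.mk P₀) = P' := by
      intro P' hP'
      rw [Ideal.comap_map_of_surjective' _ Ideal.Quotient.mk_surjective, Ideal.mk_ker,
        sup_eq_left.2 hP']
    have h₁ := (Ideal.height_le_iff.1 hlt) _ hPmap (lt_of_le_of_ne (Ideal.map_mono hPm) fun h => by
      have := congrArg (Ideal.comap (Ideal.Quotient.mk P₀)) h
      rw [hcomap _ hP₀P, hcomap _ (hP₀P.trans hPm)] at this
      exact hyP (this ▸ hy))
    rw [Nat.cast_one, Order.lt_one_iff, Ideal.height_eq_zero_iff] at h₁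
    rw [IsDomain.minimalPrimes_eq_singleton_bot, Set.mem_singleton_iff] at h₁
    have h₂ := Ideal.mem_map_of_mem (Ideal.Quotient.mk P₀) hsP
    rw [h₁, Ideal.mem_bot, Ideal.Quotient.eq_zero_iff_mem] at h₂
    exact hs h₂
  · rintro ⟨N, hN⟩ P hP
    have := hP.isPrime
    refine ⟨y ^ N, fun h => hm ?_, hN⟩
    rwa [← hI P hP.isPrime hP.1.2 (this.mem_of_pow_mem _ h)]

end Symbolic

lemma mem_of_pow_mul_mem {R : Type*} [CommRing R] {K : Ideal R} {y : R}
    (hy : ∀ u, y * u ∈ K → u ∈ K) (n : ℕ) {u : R} (hu : y ^ n * u ∈ K) : u ∈ K := by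
  induction n with
  | zero => simpa using hu
  | succ n ih => exact ih (hy _ (by convert hu using 1; ring))

namespace MinorData

section Colon

variable {R : Type*} [CommRing R] {X Y Z p q a b c d e f : R}
  (D : MinorData X Y Z p q a b c d e f)
include D

lemma span_sq_mul_span_le :
    Ideal.span {X, Y, Z} ^ 2 * Ideal.span {d, e, f} ≤ Ideal.span {a, b, c} ^ 3 := by
  obtain ⟨g, hXg, hYg, hZg, hYd, hZd, hZe⟩ := D.exists_quadratic
  set I := Ideal.span {a, b, c} with hI
  have ha : a ∈ I := Ideal.subset_span (by simp)
  have hb : b ∈ I := Ideal.subset_span (by simp)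
  have hc : c ∈ I := Ideal.subset_span (by simp)
  have sq : ∀ u v, u ∈ I → v ∈ I → ∀ t, t * (u * v) ∈ I ^ 2 := fun u v hu hv t =>
    Ideal.mul_mem_left _ _ (pow_two I ▸ Ideal.mul_mem_mul hu hv)
  have cube : ∀ u v w, u ∈ I → v ∈ I → w ∈ I → ∀ t,
      t * (u * (v * w)) ∈ I ^ 3 ⊔ I * Ideal.span {g} := fun u v w hu hv hw t =>
    Ideal.mem_sup_left (Ideal.mul_mem_left _ _
      (pow_three I ▸ Ideal.mul_mem_mul hu (Ideal.mul_mem_mul hv hw)))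
  have lin : ∀ u, u ∈ I → ∀ t, t * (u * g) ∈ I ^ 3 ⊔ I * Ideal.span {g} := fun u hu t =>
    Ideal.mem_sup_right (Ideal.mul_mem_left _ _
      (Ideal.mul_mem_mul hu (Ideal.mem_span_singleton_self g)))
  have hg : Ideal.span {X, Y, Z} * Ideal.span {g} ≤ I ^ 2 := by
    rw [Ideal.span_mul_span', Ideal.span_le]
    rintro _ ⟨_, (rfl | rfl | rfl), _, rfl, rfl⟩ <;> change _ * _ ∈ I ^ 2
    · convert sub_mem (sq b b hb hb (q * Z)) (sq a c ha hc (p * Y)) using 1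
      linear_combination hXg
    · convert sub_mem (sq c c hc hc X) (sq a b ha hb (q * Z)) using 1
      linear_combination hYg
    · convert sub_mem (sq a a ha ha (p * Y)) (sq b c hb hc X) using 1
      linear_combination hZg
  have hdef : Ideal.span {X, Y, Z} * Ideal.span {d, e, f} ≤ I ^ 3 ⊔ I * Ideal.span {g} := by
    rw [Ideal.span_mul_span', Ideal.span_le]
    rintro _ ⟨_, (rfl | rfl | rfl), _, (rfl | rfl | rfl), rfl⟩ <;>
      change _ * _ ∈ I ^ 3 ⊔ I * Ideal.span {g}
    · convert add_mem (cube b b b hb hb hb (- q)) (cube a c c ha hc hc (- p)) using 1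
      linear_combination D.X_mul_d
    · convert add_mem (lin c hc 1) (cube a b b ha hb hb (- q)) using 1
      linear_combination hYd - D.Y_mul_d_sub
    · convert add_mem (lin b hb 1) (cube a a c ha ha hc p) using 1
      linear_combination D.Z_mul_d_add - hZd
    · convert add_mem (lin c hc 1) (cube a b b ha hb hb q) using 1
      linear_combination hYd
    · convert add_mem (cube c c c hc hc hc 1) (cube a a b ha ha hb q) using 1
      linear_combination D.Y_mul_e
    · convert add_mem (lin a ha (- 1)) (cube b c c hb hc hc 1) using 1
      linear_combination hZe - D.Z_mul_e_sub
    · convert add_mem (lin b hb (- 1)) (cube a a c ha ha hc p) using 1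
      linear_combination hZd
    · convert add_mem (lin a ha (- 1)) (cube b c c hb hc hc (- 1)) using 1
      linear_combination hZe
    · convert add_mem (cube a a a ha ha ha (- p)) (cube b b c hb hb hc (- 1)) using 1
      linear_combination D.Z_mul_f
  calc Ideal.span {X, Y, Z} ^ 2 * Ideal.span {d, e, f}
      = Ideal.span {X, Y, Z} * (Ideal.span {X, Y, Z} * Ideal.span {d, e, f}) := by
        rw [pow_two, mul_assoc]
    _ ≤ Ideal.span {X, Y, Z} * (I ^ 3 ⊔ I * Ideal.span {g}) := Ideal.mul_mono_right hdef
    _ = Ideal.span {X, Y, Z} * I ^ 3 ⊔ I * (Ideal.span {X, Y, Z} * Ideal.span {g}) := by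
        rw [Ideal.mul_sup, mul_left_comm _ I]
    _ ≤ I ^ 3 := sup_le Ideal.mul_le_right ((Ideal.mul_mono_right hg).trans
        (pow_succ' I 2).ge)

lemma colon_eq {y : R} {n : ℕ} (hY : Y = y ^ n)
    (hy : ∀ u, y * u ∈ Ideal.span {a, b, c} ^ 3 ⊔ Ideal.span {d, e, f} →
      u ∈ Ideal.span {a, b, c} ^ 3 ⊔ Ideal.span {d, e, f}) :
    Submodule.colon ((Ideal.span {a, b, c} ^ 3 : Ideal R) : Submodule R R)
      ((Ideal.span {X, Y, Z} ^ 2 : Ideal R) : Submodule R R) =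
      Ideal.span {a, b, c} ^ 3 ⊔ Ideal.span {d, e, f} := by
  apply le_antisymm
  · intro u hu
    have hYY : Y * Y ∈ Ideal.span {X, Y, Z} ^ 2 := by
      rw [pow_two]
      exact Ideal.mul_mem_mul (Ideal.subset_span (by simp)) (Ideal.subset_span (by simp))
    exact mem_of_pow_mul_mem hy (n + n) (Ideal.mem_sup_left (by
      rw [pow_add, ← hY, mul_comm]
      exact Submodule.mem_colon.1 hu _ hYY))
  · refine sup_le (fun u hu => Submodule.mem_colon.2 fun s _ => Ideal.mul_mem_right _ _ hu)
      fun u hu => Submodule.mem_colon.2 fun s hs => D.span_sq_mul_span_le ?_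
    rw [smul_eq_mul, mul_comm u s]
    exact Ideal.mul_mem_mul hs hu

end Colon

section NotMinimal

variable {R : Type*} [CommRing R] [IsNoetherianRing R] [IsLocalRing R]
  {X Y Z p q a b c d e f : R} (D : MinorData X Y Z p q a b c d e f)
  (hCM : ∀ u v w : R, (Ideal.span {u, v, w}).radical = maximalIdeal R →
    RingTheory.Sequence.IsRegular R [u, v, w])
  (hsop : (Ideal.span {X, Y, Z}).radical = maximalIdeal R)
include D hCM hsop

lemma maximalIdeal_notMem_minimalPrimes :
    maximalIdeal R ∉ (Ideal.span {a, b, c}).minimalPrimes := by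
  intro hm
  have hrad : (Ideal.span {a, b, c}).radical = maximalIdeal R := by
    refine le_antisymm (hm.isPrime.radical_le_iff.2 hm.1.2) ?_
    rw [Ideal.radical_eq_sInf]
    exact le_sInf fun P hP => hm.2 ⟨hP.2, hP.1⟩
      (@IsLocalRing.le_maximalIdeal_of_isPrime _ _ _ P hP.2)
  obtain ⟨hX, hY, hZ⟩ := mem_span_triple_of_relation hCM hrad D.syzygy
  set Q := Ideal.span {X, Y, Z} with hQ
  have hXQ : X ∈ Q := Ideal.subset_span (by simp)
  have hYQ : Y ∈ Q := Ideal.subset_span (by simp)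
  have hZQ : Z ∈ Q := Ideal.subset_span (by simp)
  have hQm : Q ≤ maximalIdeal R := hsop ▸ Ideal.le_radical
  have hle : Q ≤ maximalIdeal R • Q := by
    calc Q ≤ Ideal.span {a, b, c} := by
          rw [hQ, Ideal.span_le]
          rintro _ (rfl | rfl | rfl) <;> assumption
      _ ≤ Q * Q := by
          have mul : ∀ u v, u ∈ Q → v ∈ Q → ∀ t, t * (u * v) ∈ Q * Q := fun u v hu hv t =>
            Ideal.mul_mem_left _ _ (Ideal.mul_mem_mul hu hv)
          rw [Ideal.span_le]
          rintro _ (rfl | rfl | rfl) <;> rw [SetLike.mem_coe]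
          · convert sub_mem (mul Z Z hZQ hZQ (Z * q)) (mul X Y hXQ hYQ X) using 1
            linear_combination D.ha
          · convert sub_mem (mul X X hXQ hXQ X) (mul Y Z hYQ hZQ (Y * p)) using 1
            linear_combination D.hb
          · convert sub_mem (mul Y Y hYQ hYQ (Y * p)) (mul X Z hXQ hZQ (Z * q)) using 1
            linear_combination D.hc
      _ ≤ maximalIdeal R • Q := Ideal.mul_mono_left hQm
  have hbot := Submodule.eq_bot_of_le_smul_of_le_jacobson_bot _ Q (IsNoetherian.noetherian _) hle
    (IsLocalRing.maximalIdeal_le_jacobson _)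
  rw [hbot, Ideal.mem_bot] at hXQ
  exact one_ne_zero ((hCM X Y Z hsop).triple.1 1 (by rw [hXQ, zero_mul]))

end NotMinimal

end MinorData
/-- Assume `α = 1`, `α' = 2`, `2β ≤ β'`, `2γ ≤ γ'`, `Q = (x, y^β, z^γ)` and `2`
is a unit.  Then `depth R/(I³ :_R Q²) > 0` (i.e. the maximal ideal contains a
nonzerodivisor on `R/(I³ :_R Q²)`), so `I⁽³⁾ = I³ :_R Q²`, and
`length(I⁽³⁾/I³) = 6 · length(R/Q)`. -/
theorem third_symbolic_power_two_unit
    {R : Type*} [CommRing R] [IsNoetherianRing R] [IsLocalRing R]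
    (hdim : ringKrullDim R = 3)
    (hCM : ∀ u v w : R, (Ideal.span {u, v, w}).radical = maximalIdeal R →
      RingTheory.Sequence.IsRegular R [u, v, w])
    (x y z : R) (hsop : (Ideal.span {x, y, z}).radical = maximalIdeal R)
    (β γ β' γ' : ℕ)
    (hβ : 0 < β) (hγ : 0 < γ)
    (hββ' : 2 * β ≤ β') (hγγ' : 2 * γ ≤ γ')
    (a b c : R)
    (ha : a = z ^ (γ + γ') - x ^ 2 * y ^ β)
    (hb : b = x ^ 3 - y ^ β' * z ^ γ)
    (hc : c = y ^ (β + β') - x * z ^ γ')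
    (I : Ideal R) (hI : I = Ideal.span {a, b, c})
    (Q : Ideal R) (hQ : Q = Ideal.span {x, y ^ β, z ^ γ})
    (h2 : IsUnit (2 : R))
    (J : Ideal R)
    (hJ : J = Submodule.colon ((I ^ 3 : Ideal R) : Submodule R R)
      ((Q ^ 2 : Ideal R) : Submodule R R)) :
    (∃ r ∈ maximalIdeal R, IsSMulRegular (R ⧸ J) r) ∧
      symbolicPower I 3 = J ∧
      ∃ m : ℕ, HasLength R (R ⧸ Q) m ∧
        HasLength R (↥J ⧸ Submodule.comap J.subtype ((I ^ 3 : Ideal R) : Submodule R R))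
          (6 * m) := by
  obtain ⟨h, h2⟩ : ∃ h : R, 2 * h = 1 := ⟨_, h2.mul_val_inv⟩
  obtain ⟨m, rfl⟩ := Nat.exists_eq_add_of_le hββ'
  obtain ⟨n, rfl⟩ := Nat.exists_eq_add_of_le hγγ'
  obtain ⟨d, e, f, D⟩ : ∃ d e f, MinorData x (y ^ β) (z ^ γ) (y ^ m) (z ^ n) a b c d e f := by
    refine ⟨_, _, _, ?_, ?_, ?_, rfl, rfl, rfl⟩
    · rw [ha]; ring
    · rw [hb]; ring
    · rw [hc]; ring
  have hym : y ∈ maximalIdeal R := hsop ▸ Ideal.le_radical (Ideal.subset_span (by simp))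
  have hsop' : (Ideal.span {y, z, x}).radical = maximalIdeal R := by
    rw [← hsop, Set.insert_comm x, Set.pair_comm x]
  have hsopQ : (Ideal.span {x, y ^ β, z ^ γ}).radical = maximalIdeal R := by
    rw [← hsop, ← Ideal.radical_span_triple_pow x y z one_ne_zero hβ.ne' hγ.ne', pow_one]
  have hu : ∀ u ∈ ({z ^ n, z ^ γ, (z ^ γ) ^ 2, z ^ n * z ^ γ} : Set R),
      RegularPair (Ideal.Quotient.mk (Ideal.span {y}) u)
        (Ideal.Quotient.mk (Ideal.span {y}) x) := by
    rintro u (rfl | rfl | rfl | rfl)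
    · exact regularPair_mk_pow hCM hsop' _
    · exact regularPair_mk_pow hCM hsop' _
    · rw [← pow_mul]
      exact regularPair_mk_pow hCM hsop' _
    · rw [← pow_add]
      exact regularPair_mk_pow hCM hsop' _
  have hker : ∀ s, Ideal.Quotient.mk (Ideal.span {y}) s = 0 ↔ y ∣ s :=
    Ideal.Quotient.eq_zero_iff_dvd y
  have hy : ∀ r, y * r = 0 → r = 0 := (hCM y z x hsop').triple.1
  have hsat := fun u => D.mem_of_mul_mem (u := u) Ideal.Quotient.mk_surjective hker
    (dvd_pow_self y hβ.ne') h2 hu hy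
  have hrel := fun r => D.combination_mem_pow_three_iff (r := r) Ideal.Quotient.mk_surjective hker
    (dvd_pow_self y hβ.ne') h2 hu hy hym
  have hK : J = Ideal.span {a, b, c} ^ 3 ⊔ Ideal.span {d, e, f} := by
    rw [hJ, hI, hQ]
    exact D.colon_eq rfl hsat
  refine ⟨⟨y, hym, ?_⟩, ?_, ?_⟩
  · rw [hK]
    exact (isSMulRegular_quotient_iff_mem_of_smul_mem _ _).2 hsat
  · have hprime : ∀ P : Ideal R, P.IsPrime → I ≤ P → y ∈ P → P = maximalIdeal R := by
      intro P hP hIP hyP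
      refine le_antisymm (IsLocalRing.le_maximalIdeal_of_isPrime P) ?_
      rw [hI, Ideal.span_le] at hIP
      have haP : a ∈ P := hIP (by simp)
      have hbP : b ∈ P := hIP (by simp)
      have hYP : y ^ β ∈ P := P.pow_mem_of_mem hyP β hβ
      have hxP : x ∈ P := by
        refine hP.mem_of_pow_mem 3 ?_
        convert add_mem hbP (P.mul_mem_left (y ^ β * z ^ γ * y ^ m) hYP) using 1
        rw [hb]; ring
      have hzP : z ∈ P := by
        refine hP.mem_of_pow_mem (γ + (2 * γ + n)) ?_
        convert add_mem haP (P.mul_mem_left (x ^ 2) hYP) using 1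
        rw [ha]; ring
      rw [← hsop, hP.radical_le_iff, Ideal.span_le]
      rintro _ (rfl | rfl | rfl) <;> assumption
    ext u
    rw [mem_symbolicPower_iff_exists_pow_mul_mem hym hprime
      (hI ▸ D.maximalIdeal_notMem_minimalPrimes hCM hsopQ)]
    constructor
    · rintro ⟨N, hN⟩
      rw [hK]
      exact mem_of_pow_mul_mem hsat N (Ideal.mem_sup_left (hI ▸ hN))
    · intro hu
      rw [hJ] at hu
      refine ⟨β + β, ?_⟩
      have hYQ : y ^ β ∈ Q := hQ ▸ Ideal.subset_span (by simp)
      rw [pow_add, mul_comm]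
      exact Submodule.mem_colon.1 hu _ (pow_two Q ▸ Ideal.mul_mem_mul hYQ hYQ)
  · obtain ⟨m, hm⟩ := ENat.ne_top_iff_exists.1 (length_quotient_ne_top hsopQ)
    refine ⟨m, ?_, ?_⟩
    · rw [hasLength_iff, hQ, hm]
    · rw [hasLength_iff, hI, length_quotient_pow_three hK hrel, length_quotient_relationModule h2
        (fun r s t => mem_span_triple_of_relation hCM hsopQ), ← hm]
      norm_cast
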